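/- arXiv:2309.09831 — 2 statements merged into one kernel-verified Lean document; each statement's English description precedes it below -/
import Mathlib

section
/- Lemma 9 (first-order term in the risk expansion). Let Σ be a symmetric positive definite p×p matrix with largest eigenvalue λ_max(Σ) ≤ M, let μ_d ∈ ℝ^p be nonzero, and set β* = Σ^{-1}μ_d and Δ = √(μ_dᵀΣ^{-1}μ_d) > 0. Let β̂ ∈ ℝ^p, δ = β̂ − β*, and Δ̂ = √(β̂ᵀΣβ̂). If |μ_dᵀδ| ≤ Δ²/2, then Δ̂ > 0 and Δ/2 − (μ_dᵀβ̂)/(2Δ̂) ≤ (M/(2Δ))·‖δ‖₂². -/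
/-!
Write `δ = βh - βstar`, `q = δᵀ S δ` and `m = μdᵀ βh`. Since `S βstar = μd`, polarization gives
`Δh ^ 2 = 2 * m - Δ ^ 2 + q`, and after clearing denominators the bound
`Δ / 2 - m / (2 * Δh) ≤ q / (2 * Δ)` becomes
`-Δ * (Δ - Δh) ^ 2 ≤ q * (2 * Δh - Δ)`, which holds as soon as `Δ / 2 ≤ Δh`.
That lower bound follows from the positivity of the quadratic form at `βh - βstar / 2`, together
with `m ≥ Δ ^ 2 / 2`. Finally `q ≤ M * ‖δ‖₂ ^ 2` by the bound on the largest eigenvalue.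
-/

open MeasureTheory ProbabilityTheory Matrix Real

noncomputable section

namespace PandaPaper

variable {p : ℕ}

/-- The ℓ¹ norm of a vector in `ℝ^p`. -/
def l1 (v : Fin p → ℝ) : ℝ := ∑ j, |v j|

/-- The ℓ² (Euclidean) norm of a vector in `ℝ^p`. -/
def l2 (v : Fin p → ℝ) : ℝ := Real.sqrt (∑ j, (v j) ^ 2)

/-- The ℓ∞ (coordinatewise sup) norm of a vector in `ℝ^p`. -/
def linf (v : Fin p → ℝ) : ℝ := ⨆ j, |v j|

/-- The quadratic form `vᵀ S v`. -/
def quadForm (S : Matrix (Fin p) (Fin p) ℝ) (v : Fin p → ℝ) : ℝ := v ⬝ᵥ S.mulVec v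

/-- `σ_max = max_j √(S_jj)`. -/
def sigmaMax (S : Matrix (Fin p) (Fin p) ℝ) : ℝ := Real.sqrt (⨆ j, S j j)

/-- A measure `ν` on `ℝ^p` is the Gaussian measure `N_p(m, S)`:
it is a probability measure under which every linear functional `z ↦ vᵀz` has the
one-dimensional Gaussian distribution with mean `vᵀm` and variance `vᵀSv`. -/
def IsGaussianMeasure (m : Fin p → ℝ) (S : Matrix (Fin p) (Fin p) ℝ)
    (ν : Measure (Fin p → ℝ)) : Prop :=
  IsProbabilityMeasure ν ∧
    ∀ v : Fin p → ℝ,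
      ν.map (fun z => ∑ j, v j * z j)
        = gaussianReal (∑ j, v j * m j) (Real.toNNReal (quadForm S v))

/-- A random vector `Y : Ω → ℝ^p` has the Gaussian distribution `N_p(m, S)`:
each coordinate is measurable and every linear functional `vᵀY` has the one-dimensional
Gaussian distribution with mean `vᵀm` and variance `vᵀSv`. -/
def IsGaussianVec {Ω : Type} [MeasureSpace Ω] (m : Fin p → ℝ)
    (S : Matrix (Fin p) (Fin p) ℝ) (Y : Ω → Fin p → ℝ) : Prop :=
  (∀ j, Measurable fun ω => Y ω j) ∧
    ∀ v : Fin p → ℝ,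
      (ℙ : Measure Ω).map (fun ω => ∑ j, v j * Y ω j)
        = gaussianReal (∑ j, v j * m j) (Real.toNNReal (quadForm S v))

/-- The sample mean of `n` random vectors. -/
def sampleMean {Ω : Type} (n : ℕ) (X : Fin n → Ω → Fin p → ℝ) (ω : Ω) : Fin p → ℝ :=
  fun j => (n : ℝ)⁻¹ * ∑ i, X i ω j

/-- The pooled sample covariance matrix of `K` classes of `n` samples each, with
normalization `(K(n-1))⁻¹`. -/
def pooledCov {Ω : Type} (K n : ℕ) (X : Fin K → Fin n → Ω → Fin p → ℝ) (ω : Ω) :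
    Matrix (Fin p) (Fin p) ℝ :=
  fun j k => ((K : ℝ) * ((n : ℝ) - 1))⁻¹ *
    ∑ ℓ, ∑ i, (X ℓ i ω j - sampleMean n (X ℓ) ω j) * (X ℓ i ω k - sampleMean n (X ℓ) ω k)

/-- Feasibility for the PANDA program with data `(Σ̂, μ̂_d, σ̂_max)` and tuning parameter `λ`. -/
def Feasible (Sh : Matrix (Fin p) (Fin p) ℝ) (μdh : Fin p → ℝ) (σh lam : ℝ)
    (β : Fin p → ℝ) (τ : ℝ) : Prop :=
  linf (Sh.mulVec β - μdh) ≤ lam * σh * (τ + 1) ∧ Real.sqrt (quadForm Sh β) ≤ τ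

/-- `(βh, τh)` is an optimal solution of the PANDA program with tuning parameters `c, λ`:
it is feasible and minimizes `‖β‖₁ + cτ²` over the feasible set. -/
def Optimal (Sh : Matrix (Fin p) (Fin p) ℝ) (μdh : Fin p → ℝ) (σh c lam : ℝ)
    (βh : Fin p → ℝ) (τh : ℝ) : Prop :=
  Feasible Sh μdh σh lam βh τh ∧
    ∀ β τ, Feasible Sh μdh σh lam β τ → l1 βh + c * τh ^ 2 ≤ l1 β + c * τ ^ 2

/-- The weak-ℓ_q ball `B_q(R)`, with the convention `|t|^0 = 1` for `t ≠ 0` and `= 0`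
for `t = 0`. -/
def memBq (q R : ℝ) (β : Fin p → ℝ) : Prop :=
  ∑ j, (if β j = 0 then (0 : ℝ) else |β j| ^ q) ≤ R

/-- Eigenvalue assumption `M⁻¹ ≤ λ_min(S) ≤ λ_max(S) ≤ M`, stated via the quadratic form. -/
def EigenBounds (S : Matrix (Fin p) (Fin p) ℝ) (M : ℝ) : Prop :=
  ∀ v : Fin p → ℝ,
    M⁻¹ * (∑ j, (v j) ^ 2) ≤ quadForm S v ∧ quadForm S v ≤ M * ∑ j, (v j) ^ 2

/-- Restriction of a vector to a subset of coordinates (zero outside the subset). -/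
def restrict (T : Finset (Fin p)) (v : Fin p → ℝ) : Fin p → ℝ :=
  fun j => if j ∈ T then v j else 0

/-- The standard Gaussian cumulative distribution function `Φ`. -/
def stdGaussCDF (x : ℝ) : ℝ := (gaussianReal 0 1 (Set.Iic x)).toReal


/-- Expansion of the quadratic form at `x - t • b`, where `S b = u`. -/
lemma quadForm_sub_smul {S : Matrix (Fin p) (Fin p) ℝ} (hS : S.PosDef) {b u : Fin p → ℝ}
    (hb : S.mulVec b = u) (x : Fin p → ℝ) (t : ℝ) :
    quadForm S (x - t • b) = quadForm S x - 2 * t * (u ⬝ᵥ x) + t ^ 2 * (u ⬝ᵥ b) := by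
  have hsymm : b ⬝ᵥ S.mulVec x = u ⬝ᵥ x := by
    have hT : Sᵀ = S := by simpa using hS.isHermitian.eq
    rw [dotProduct_mulVec, ← mulVec_transpose, hT, hb]
  unfold quadForm
  rw [mulVec_sub, mulVec_smul, hb]
  simp only [sub_dotProduct, dotProduct_sub, smul_dotProduct, dotProduct_smul, smul_eq_mul, hsymm]
  rw [dotProduct_comm x u, dotProduct_comm b u]
  ring

lemma quadForm_nonneg {S : Matrix (Fin p) (Fin p) ℝ} (hS : S.PosDef) (v : Fin p → ℝ) :
    0 ≤ quadForm S v := by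
  simpa [quadForm] using hS.posSemidef.dotProduct_mulVec_nonneg v

/-- **Lemma 9 (first-order term in the risk expansion).** -/
theorem risk_first_order_term
    {p : ℕ} (hp : 1 ≤ p)
    (S : Matrix (Fin p) (Fin p) ℝ) (M : ℝ)
    (hS : S.PosDef) (hM : 1 ≤ M)
    -- `λ_max(Σ) ≤ M`, stated via the quadratic form
    (hMax : ∀ v : Fin p → ℝ, quadForm S v ≤ M * ∑ j, (v j) ^ 2)
    (μd : Fin p → ℝ) (hμd : μd ≠ 0)
    (βstar βh : Fin p → ℝ) (Δ Δh : ℝ)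
    (hβ : βstar = (S⁻¹).mulVec μd)
    (hΔ : Δ = Real.sqrt (μd ⬝ᵥ (S⁻¹).mulVec μd)) (hΔpos : 0 < Δ)
    (hΔh : Δh = Real.sqrt (quadForm S βh))
    (hclose : |μd ⬝ᵥ (βh - βstar)| ≤ Δ ^ 2 / 2) :
    0 < Δh ∧
      Δ / 2 - (μd ⬝ᵥ βh) / (2 * Δh) ≤ M / (2 * Δ) * l2 (βh - βstar) ^ 2 := by
  have hSb : S.mulVec βstar = μd := by
    have hu : IsUnit S.det := isUnit_iff_ne_zero.mpr hS.det_pos.ne'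
    rw [hβ, mulVec_mulVec, mul_nonsing_inv _ hu, one_mulVec]
  have hD2 : Δ ^ 2 = μd ⬝ᵥ βstar := by
    rw [hβ, hΔ]
    exact Real.sq_sqrt (Real.sqrt_pos.mp (hΔ ▸ hΔpos)).le
  have hH2 : Δh ^ 2 = quadForm S βh := by
    rw [hΔh, Real.sq_sqrt (quadForm_nonneg hS βh)]
  have hH0 : 0 ≤ Δh := hΔh ▸ Real.sqrt_nonneg _
  have hL : quadForm S (βh - βstar) ≤ M * l2 (βh - βstar) ^ 2 := by
    have h := hMax (βh - βstar)
    rwa [l2, Real.sq_sqrt (Finset.sum_nonneg fun j _ => sq_nonneg _)]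
  have hq : quadForm S (βh - βstar) = Δh ^ 2 - 2 * (μd ⬝ᵥ βh) + Δ ^ 2 := by
    have h := quadForm_sub_smul hS hSb βh 1
    rw [one_smul, ← hD2, ← hH2] at h
    linarith
  have hq0 := quadForm_nonneg hS (βh - βstar)
  -- positivity of the form at `βh - βstar / 2`
  have hhalf : 0 ≤ Δh ^ 2 - μd ⬝ᵥ βh + Δ ^ 2 / 4 := by
    have h := quadForm_sub_smul hS hSb βh (1 / 2)
    rw [← hD2, ← hH2] at h
    have h0 := quadForm_nonneg hS (βh - (1 / 2 : ℝ) • βstar)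
    linarith
  have hm : Δ ^ 2 / 2 ≤ μd ⬝ᵥ βh := by
    have h := (abs_le.mp hclose).1
    rw [dotProduct_sub, ← hD2] at h
    linarith
  have hHD : Δ / 2 ≤ Δh := by
    refine (sq_le_sq₀ (by linarith) hH0).mp ?_
    linarith [show (Δ / 2) ^ 2 = Δ ^ 2 / 4 by ring]
  have hpos : 0 < Δh := by linarith
  refine ⟨hpos, ?_⟩
  generalize quadForm S (βh - βstar) = q at *
  generalize μd ⬝ᵥ βh = m at *
  have hkey : Δ / 2 - m / (2 * Δh) ≤ q / (2 * Δ) := by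
    rw [← sub_nonneg]
    have e : q / (2 * Δ) - (Δ / 2 - m / (2 * Δh))
        = (Δ * (Δ - Δh) ^ 2 + q * (2 * Δh - Δ)) / (4 * Δ * Δh) := by
      -- with `m` eliminated by polarization the identity is rational in `Δ`, `Δh`, `q`
      have hm' : m = (Δh ^ 2 + Δ ^ 2 - q) / 2 := by linarith
      rw [hm']
      field_simp
      ring
    rw [e]
    have : 0 ≤ 2 * Δh - Δ := by linarith
    positivity
  calc _ ≤ q / (2 * Δ) := hkey
    _ ≤ M * l2 (βh - βstar) ^ 2 / (2 * Δ) := by gcongr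
    _ = _ := by ring

end PandaPaper
end
end

section
/- Optimality of Fisher's linear discriminant rule among linear rules. Let Σ be a symmetric positive definite p×p matrix, μ^{(0)} ≠ μ^{(1)} ∈ ℝ^p, μ_d = μ^{(1)} − μ^{(0)}, Δ = √(μ_dᵀΣ^{-1}μ_d), and let Φ be the standard normal CDF. For every α ∈ ℝ^p and every β ∈ ℝ^p with β ≠ 0, the misclassification rate of the linear rule f_{α,β} with equal class priors satisfies R(f_{α,β}) = ½Φ(−βᵀ(α−μ^{(0)})/√(βᵀΣβ)) + ½Φ(−βᵀ(μ^{(1)}−α)/√(βᵀΣβ)) ≥ Φ(−Δ/2), and equality holds for α* = (μ^{(0)}+μ^{(1)})/2 and β* = Σ^{-1}μ_d, i.e. R(f_{α*,β*}) = Φ(−Δ/2). -/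
/-!
The projection `βᵀZ` is one-dimensional Gaussian, so both error terms are values of `Φ`
(`cdf_of_pos`, `cdf_of_nonpos`), at `-a` and `-b` with
`a + b = βᵀμd / √(βᵀΣβ)`. Cauchy–Schwarz for the inner product defined by `Σ`, applied to `β` and
`Σ⁻¹μd`, gives `a + b ≤ Δ` (`dotProduct_le`). It remains to bound the average of `Φ(-a)` and
`Φ(-b)` below by `Φ(-Δ/2)` (`cdf_avg_ge`). `Φ` is not convex on `ℝ`, so this is not just Jensen:
after raising `a` to make `a + b = Δ`, the arguments are symmetric about `-Δ/2 ≤ 0`, and the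
standard normal density at `-Δ/2 + u` is at least that at `-Δ/2 - u` for `u ≥ 0`
(`two_mul_cdf_le`). At Fisher's rule both arguments equal `-Δ/2`.
-/

open MeasureTheory ProbabilityTheory Matrix Real

noncomputable section

namespace PandaPaper

variable {p : ℕ}

lemma stdGaussCDF_mono : Monotone stdGaussCDF := fun _ _ h =>
  ENNReal.toReal_mono (measure_ne_top _ _) (measure_mono (Set.Iic_subset_Iic.mpr h))

lemma stdGaussCDF_sub (x y : ℝ) :
    stdGaussCDF y - stdGaussCDF x = ∫ t in x..y, gaussianPDFReal 0 1 t := by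
  have h : ∀ x, stdGaussCDF x = ∫ t in Set.Iic x, gaussianPDFReal 0 1 t := fun x => by
    rw [stdGaussCDF, gaussianReal_apply_eq_integral 0 one_ne_zero, ENNReal.toReal_ofReal]
    exact integral_nonneg fun t => gaussianPDFReal_nonneg 0 1 t
  rw [h, h]
  exact intervalIntegral.integral_Iic_sub_Iic (integrable_gaussianPDFReal 0 1).integrableOn
    (integrable_gaussianPDFReal 0 1).integrableOn

/-- `Φ` is midpoint-convex about any nonpositive centre, however far the two points reach into the
region where `Φ` is concave. -/
lemma two_mul_cdf_le {h t : ℝ} (hh : 0 ≤ h) (ht : 0 ≤ t) :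
    2 * stdGaussCDF (-h) ≤ stdGaussCDF (-h + t) + stdGaussCDF (-h - t) := by
  have hu := stdGaussCDF_sub (-h) (-h + t)
  have hl := stdGaussCDF_sub (-h - t) (-h)
  have e1 := intervalIntegral.integral_comp_add_left (a := 0) (b := t) (gaussianPDFReal 0 1) (-h)
  have e2 := intervalIntegral.integral_comp_sub_left (a := 0) (b := t) (gaussianPDFReal 0 1) (-h)
  simp only [add_zero, sub_zero] at e1 e2
  have hint := integrable_gaussianPDFReal 0 1
  have key : ∫ u in (0 : ℝ)..t, gaussianPDFReal 0 1 (-h - u)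
      ≤ ∫ u in (0 : ℝ)..t, gaussianPDFReal 0 1 (-h + u) := by
    refine intervalIntegral.integral_mono_on ht (hint.comp_sub_left _).intervalIntegrable
      (hint.comp_add_left _).intervalIntegrable fun u hu => ?_
    simp only [gaussianPDFReal]
    gcongr ?_ * Real.exp (?_ / _)
    nlinarith [mul_nonneg hh hu.1]
  linarith

lemma cdf_avg_ge {a b D : ℝ} (hD : 0 ≤ D) (hab : a + b ≤ D) :
    stdGaussCDF (-(D / 2)) ≤ (1 / 2) * stdGaussCDF (-a) + (1 / 2) * stdGaussCDF (-b) := by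
  have hmono : stdGaussCDF (-(D - b)) ≤ stdGaussCDF (-a) := stdGaussCDF_mono (by linarith)
  have hD' : 0 ≤ D / 2 := by linarith
  rcases le_total (D / 2) b with h | h
  · have := two_mul_cdf_le hD' (t := b - D / 2) (by linarith)
    rw [show -(D / 2) + (b - D / 2) = -(D - b) by ring,
      show -(D / 2) - (b - D / 2) = -b by ring] at this
    linarith
  · have := two_mul_cdf_le hD' (t := D / 2 - b) (by linarith)
    rw [show -(D / 2) + (D / 2 - b) = -b by ring,
      show -(D / 2) - (D / 2 - b) = -(D - b) by ring] at this
    linarith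

/-- Every real Gaussian is an affine image of the standard one. The scale may
have either sign, which is what lets an upper tail be read off from `Φ` directly. -/
lemma gaussianReal_eq_map (m s : ℝ) {q : ℝ} (hq : q = s ^ 2) :
    gaussianReal m (Real.toNNReal q) = (gaussianReal 0 1).map (fun x => s * x + m) := by
  have : (fun x : ℝ => s * x + m) = (fun x => x + m) ∘ (fun x => s * x) := rfl
  rw [this, ← Measure.map_map (by fun_prop) (by fun_prop), gaussianReal_map_const_mul,
    gaussianReal_map_add_const]
  congr 1
  · simp
  · ext
    simp [hq, sq_nonneg]

lemma quadForm_pos {p : ℕ} {S : Matrix (Fin p) (Fin p) ℝ} (hS : S.PosDef) {β : Fin p → ℝ}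
    (hβ : β ≠ 0) : 0 < quadForm S β := by
  simpa [quadForm] using hS.dotProduct_mulVec_pos hβ

lemma cdf_of_pos {p : ℕ} {S : Matrix (Fin p) (Fin p) ℝ} (hS : S.PosDef) {m : Fin p → ℝ}
    {ν : Measure (Fin p → ℝ)} (hν : IsGaussianMeasure m S ν) (α : Fin p → ℝ) {β : Fin p → ℝ}
    (hβ : β ≠ 0) :
    (ν {z | 0 < ∑ j, β j * (z j - α j)}).toReal
      = stdGaussCDF (-((∑ j, β j * (α j - m j)) / Real.sqrt (quadForm S β))) := by
  have hq := quadForm_pos hS hβ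
  have hs := Real.sqrt_pos.mpr hq
  set s := Real.sqrt (quadForm S β) with hsdef
  have hset : {z : Fin p → ℝ | 0 < ∑ j, β j * (z j - α j)}
      = (fun z => ∑ j, β j * z j) ⁻¹' Set.Ioi (∑ j, β j * α j) := by
    ext z
    simp [mul_sub, Finset.sum_sub_distrib]
  -- the scale `-s` turns the upper tail into a lower one
  have hset' : (fun x : ℝ => -s * x + ∑ j, β j * m j) ⁻¹' Set.Ioi (∑ j, β j * α j)
      = Set.Iio (-((∑ j, β j * (α j - m j)) / s)) := by
    ext x
    simp only [mul_sub, Finset.sum_sub_distrib, Set.mem_preimage, Set.mem_Ioi, Set.mem_Iio]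
    rw [← neg_div, lt_div_iff₀ hs]
    constructor <;> intro h <;> linarith
  rw [hset, ← Measure.map_apply (by fun_prop) measurableSet_Ioi, hν.2 β,
    gaussianReal_eq_map _ (-s) (by rw [neg_sq, hsdef, Real.sq_sqrt hq.le]),
    Measure.map_apply (by fun_prop) measurableSet_Ioi, hset', stdGaussCDF]
  have := nullSingletonClass_gaussianReal (μ := 0) (v := 1) one_ne_zero
  rw [measure_congr Iio_ae_eq_Iic]

lemma cdf_of_nonpos {p : ℕ} {S : Matrix (Fin p) (Fin p) ℝ} (hS : S.PosDef) {m : Fin p → ℝ}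
    {ν : Measure (Fin p → ℝ)} (hν : IsGaussianMeasure m S ν) (α : Fin p → ℝ) {β : Fin p → ℝ}
    (hβ : β ≠ 0) :
    (ν {z | ∑ j, β j * (z j - α j) ≤ 0}).toReal
      = stdGaussCDF (-((∑ j, β j * (m j - α j)) / Real.sqrt (quadForm S β))) := by
  have hq := quadForm_pos hS hβ
  have hs := Real.sqrt_pos.mpr hq
  set s := Real.sqrt (quadForm S β) with hsdef
  have hset : {z : Fin p → ℝ | ∑ j, β j * (z j - α j) ≤ 0}
      = (fun z => ∑ j, β j * z j) ⁻¹' Set.Iic (∑ j, β j * α j) := by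
    ext z
    simp [mul_sub, Finset.sum_sub_distrib]
  have hset' : (fun x : ℝ => s * x + ∑ j, β j * m j) ⁻¹' Set.Iic (∑ j, β j * α j)
      = Set.Iic (-((∑ j, β j * (m j - α j)) / s)) := by
    ext x
    simp only [mul_sub, Finset.sum_sub_distrib, Set.mem_preimage, Set.mem_Iic]
    rw [← neg_div, le_div_iff₀ hs]
    constructor <;> intro h <;> linarith
  rw [hset, ← Measure.map_apply (by fun_prop) measurableSet_Iic, hν.2 β,
    gaussianReal_eq_map _ s (by rw [hsdef, Real.sq_sqrt hq.le]),
    Measure.map_apply (by fun_prop) measurableSet_Iic, hset', stdGaussCDF]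

/-- Cauchy–Schwarz for the inner product `⟨v, w⟩ = vᵀSw`, applied to `β` and `S⁻¹μd`. -/
lemma dotProduct_le {p : ℕ} {S : Matrix (Fin p) (Fin p) ℝ} (hS : S.PosDef) (β μd : Fin p → ℝ) :
    β ⬝ᵥ μd ≤ Real.sqrt (μd ⬝ᵥ (S⁻¹).mulVec μd) * Real.sqrt (quadForm S β) := by
  have hdet : IsUnit S.det := (Matrix.isUnit_iff_isUnit_det S).mp hS.isUnit
  have hB : LinearMap.IsSymm (Matrix.toBilin' S) :=
    ⟨fun x y => by
      have hT : Sᵀ = S := by simpa using hS.1.eq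
      simp only [Matrix.toBilin'_apply', RingHom.id_apply]
      rw [dotProduct_mulVec, ← mulVec_transpose, hT, dotProduct_comm]⟩
  have hpos : ∀ x, 0 ≤ Matrix.toBilin' S x x := fun x => by
    simpa [Matrix.toBilin'_apply'] using hS.posSemidef.dotProduct_mulVec_nonneg x
  have h := LinearMap.BilinForm.apply_sq_le_of_symm _ hpos hB β (S⁻¹ *ᵥ μd)
  simp only [Matrix.toBilin'_apply', mulVec_mulVec, Matrix.mul_nonsing_inv _ hdet,
    one_mulVec] at h
  rw [dotProduct_comm (S⁻¹ *ᵥ μd)] at h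
  have hq : 0 ≤ quadForm S β := by simpa [quadForm, Matrix.toBilin'_apply'] using hpos β
  rw [← Real.sqrt_mul' _ hq, mul_comm]
  exact Real.le_sqrt_of_sq_le h

/-- **Optimality of Fisher's linear discriminant rule among linear rules.** -/
theorem fisher_rule_optimality
    {p : ℕ} (hp : 1 ≤ p)
    (S : Matrix (Fin p) (Fin p) ℝ) (hS : S.PosDef)
    (m0 m1 : Fin p → ℝ) (hm : m0 ≠ m1)
    (μd : Fin p → ℝ) (hμd : μd = m1 - m0)
    (Δ : ℝ) (hΔ : Δ = Real.sqrt (μd ⬝ᵥ (S⁻¹).mulVec μd))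
    (ν0 ν1 : Measure (Fin p → ℝ))
    (hν0 : IsGaussianMeasure m0 S ν0) (hν1 : IsGaussianMeasure m1 S ν1) :
    (∀ (α β : Fin p → ℝ), β ≠ 0 →
      (1 / 2) * (ν0 {z | 0 < ∑ j, β j * (z j - α j)}).toReal
          + (1 / 2) * (ν1 {z | ∑ j, β j * (z j - α j) ≤ 0}).toReal
        = (1 / 2) * stdGaussCDF
              (-((∑ j, β j * (α j - m0 j)) / Real.sqrt (quadForm S β)))
          + (1 / 2) * stdGaussCDF
              (-((∑ j, β j * (m1 j - α j)) / Real.sqrt (quadForm S β))) ∧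
      stdGaussCDF (-(Δ / 2))
        ≤ (1 / 2) * (ν0 {z | 0 < ∑ j, β j * (z j - α j)}).toReal
          + (1 / 2) * (ν1 {z | ∑ j, β j * (z j - α j) ≤ 0}).toReal) ∧
    (1 / 2) * (ν0 {z | 0 < ∑ j, (S⁻¹).mulVec μd j * (z j - (m0 j + m1 j) / 2)}).toReal
        + (1 / 2) * (ν1 {z | ∑ j, (S⁻¹).mulVec μd j * (z j - (m0 j + m1 j) / 2) ≤ 0}).toReal
      = stdGaussCDF (-(Δ / 2)) := by
  have hdet : IsUnit S.det := (Matrix.isUnit_iff_isUnit_det S).mp hS.isUnit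
  have hμ0 : μd ≠ 0 := by
    rw [hμd]
    exact sub_ne_zero.mpr hm.symm
  refine ⟨fun α β hβ => ?_, ?_⟩
  · have hs := Real.sqrt_pos.mpr (quadForm_pos hS hβ)
    rw [cdf_of_pos hS hν0 α hβ, cdf_of_nonpos hS hν1 α hβ]
    refine ⟨rfl, cdf_avg_ge (hΔ ▸ Real.sqrt_nonneg _) ?_⟩
    rw [← add_div, div_le_iff₀ hs, hΔ]
    refine le_trans (le_of_eq ?_) (dotProduct_le hS β μd)
    simp only [dotProduct, hμd, Pi.sub_apply, ← Finset.sum_add_distrib]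
    exact Finset.sum_congr rfl fun j _ => by ring
  · set w := S⁻¹ *ᵥ μd with hw
    have hSw : S *ᵥ w = μd := by
      rw [hw, mulVec_mulVec, Matrix.mul_nonsing_inv _ hdet, one_mulVec]
    have hw0 : w ≠ 0 := fun h => hμ0 (by rw [← hSw, h, mulVec_zero])
    have hqw : quadForm S w = μd ⬝ᵥ w := by rw [quadForm, hSw, dotProduct_comm]
    have hq := quadForm_pos hS hw0
    have hsum : ∀ f : Fin p → ℝ, (∀ j, f j = μd j / 2) →
        (∑ j, w j * f j) / Real.sqrt (quadForm S w) = Δ / 2 := fun f hf => by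
      have : ∑ j, w j * f j = quadForm S w / 2 := by
        rw [hqw, dotProduct, Finset.sum_div]
        exact Finset.sum_congr rfl fun j _ => by rw [hf]; ring
      rw [this, hΔ, ← hqw, div_right_comm, Real.div_sqrt]
    rw [cdf_of_pos hS hν0 (fun j => (m0 j + m1 j) / 2) hw0,
      cdf_of_nonpos hS hν1 (fun j => (m0 j + m1 j) / 2) hw0,
      hsum _ fun j => by rw [hμd, Pi.sub_apply]; ring,
      hsum _ fun j => by rw [hμd, Pi.sub_apply]; ring]
    ring

end PandaPaper
end
end
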